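/- Let C be a finite quotienting Boolean algebra, A an alphabet, α: A* → M and β: A* → N C-compatible morphisms, and S ⊆ N a good subset. Suppose an (α,β,S)-tree 𝕋 contains a branch with two distinct S-operation nodes x and x' whose labels (s,T) and (s',T') satisfy [s]_C = [s']_C. Then there exists an (α,β,S)-tree 𝕋' with strictly smaller operational size than 𝕋 and with the same root label as 𝕋. -/

import Mathlib

open scoped Pointwise

/-! Infrastructure: classes of languages, quotienting Boolean algebras, the canonical
equivalence `∼_C` on `A*`, the quotient monoid `A*/∼_C`, `C`-compatible morphisms, good
subsets and `(α,β,S)`-trees (represented through the inductive predicate describing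
the possible root labels), and the `J`-depth of a finite monoid. -/

/-- A class of languages: to every alphabet it associates a set of languages. -/
abbrev LangClass : Type 1 := ∀ A : Type, Set (Language A)

/-- A morphism `α : A* → M` recognizes `L` when `L = α⁻¹(F)` for some `F ⊆ M`. -/
def Recognizes {A M : Type} [Monoid M] (α : FreeMonoid A →* M) (L : Language A) : Prop :=
  ∃ F : Set M, L = {w : List A | α (FreeMonoid.ofList w) ∈ F}

/-- `C` is a quotienting Boolean algebra: each `C(A)` contains `∅` and `A*`, is
closed under union, intersection and complement, and under word quotients. -/
def IsQBA (C : LangClass) : Prop :=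
  ∀ (A : Type) [Fintype A],
    (⊥ : Language A) ∈ C A ∧ (⊤ : Language A) ∈ C A ∧
    (∀ K L : Language A, K ∈ C A → L ∈ C A → K ⊔ L ∈ C A ∧ K ⊓ L ∈ C A) ∧
    (∀ L ∈ C A, Lᶜ ∈ C A) ∧
    (∀ L ∈ C A, ∀ u : List A,
      {w : List A | u ++ w ∈ L} ∈ C A ∧ {w : List A | w ++ u ∈ L} ∈ C A)

/-- `C` is a finite class: `C(A)` is a finite set for every alphabet. -/
def IsFiniteClass (C : LangClass) : Prop :=
  ∀ (A : Type) [Fintype A], (C A).Finite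

/-- The canonical equivalence `∼_C` on `A*` associated with (the value at `A` of) a
class of languages: `u ∼_C v` iff `u` and `v` belong to the same languages of `C(A)`. -/
def cRel {A : Type} (𝒞 : Set (Language A)) (u v : FreeMonoid A) : Prop :=
  ∀ L ∈ 𝒞, (FreeMonoid.toList u ∈ L ↔ FreeMonoid.toList v ∈ L)

/-- The congruence on `A*` given by `∼_C` (the fact that `∼_C` is a congruence for
concatenation, which holds since `C` is a quotienting Boolean algebra, is taken as the
hypothesis `hcong`). Its quotient `(cCon 𝒞 hcong).Quotient` is the monoid `A*/∼_C`,
and `(cCon 𝒞 hcong).mk'` is the morphism `w ↦ [w]_C`. -/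
def cCon {A : Type} (𝒞 : Set (Language A))
    (hcong : ∀ u v u' v' : FreeMonoid A,
      cRel 𝒞 u u' → cRel 𝒞 v v' → cRel 𝒞 (u * v) (u' * v')) :
    Con (FreeMonoid A) where
  r := cRel 𝒞
  iseqv := ⟨fun _ _ _ => Iff.rfl, fun h L hL => (h L hL).symm,
    fun h h' L hL => (h L hL).trans (h' L hL)⟩
  mul' := fun h h' => hcong _ _ _ _ h h'

/-- A morphism `α : A* → M` is `C`-compatible when there is a monoid morphism
`s ↦ [s]_C` from `M` to `A*/∼_C` such that `[α(w)]_C = [w]_C` for every word `w`. -/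
def CCompatible {A : Type} (𝒞 : Set (Language A))
    (hcong : ∀ u v u' v' : FreeMonoid A,
      cRel 𝒞 u u' → cRel 𝒞 v v' → cRel 𝒞 (u * v) (u' * v'))
    {M : Type} [Monoid M] (α : FreeMonoid A →* M) : Prop :=
  ∃ cl : M →* (cCon 𝒞 hcong).Quotient,
    ∀ w : FreeMonoid A, cl (α w) = (cCon 𝒞 hcong).mk' w

/-- `S ⊆ N` is good (for `β`) when it contains `β(A*)` and is closed under
multiplication. -/
def GoodSubset {A N : Type} [Monoid N] (β : FreeMonoid A →* N) (S : Set N) : Prop :=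
  (∀ w : FreeMonoid A, β w ∈ S) ∧ ∀ s ∈ S, ∀ t ∈ S, s * t ∈ S

/-- `TreeRoot α β clM clN S s T` holds exactly when `(s,T) ∈ M × 2^N` is the root
label of some `(α,β,S)`-tree; `clM, clN` are the morphisms `s ↦ [s]_C` coming with the
`C`-compatibility of `α` and `β`. The three constructors correspond to the three kinds
of nodes (leaves, binary nodes and `S`-operation nodes). -/
inductive TreeRoot {A M N Q : Type} [Monoid M] [Monoid N] [Monoid Q]
    (α : FreeMonoid A →* M) (β : FreeMonoid A →* N)
    (clM : M →* Q) (clN : N →* Q) (S : Set N) : M → Set N → Prop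
  | leaf (w : FreeMonoid A) : TreeRoot α β clM clN S (α w) {β w}
  | binary {s₁ : M} {T₁ : Set N} {s₂ : M} {T₂ : Set N} (T : Set N) :
      TreeRoot α β clM clN S s₁ T₁ → TreeRoot α β clM clN S s₂ T₂ →
      T ⊆ T₁ * T₂ → TreeRoot α β clM clN S (s₁ * s₂) T
  | op {e : M} {E : Set N} (T : Set N) :
      TreeRoot α β clM clN S e E → e * e = e → E * E = E →
      T ⊆ E * {t | t ∈ S ∧ clM e = clN t} * E →
      TreeRoot α β clM clN S e T

/-- `TreeRootH α β clM clN S h s T` holds exactly when `(s,T)` is the root label of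
some `(α,β,S)`-tree of operational height at most `h` (the index is incremented at
`S`-operation nodes). -/
inductive TreeRootH {A M N Q : Type} [Monoid M] [Monoid N] [Monoid Q]
    (α : FreeMonoid A →* M) (β : FreeMonoid A →* N)
    (clM : M →* Q) (clN : N →* Q) (S : Set N) : ℕ → M → Set N → Prop
  | leaf (h : ℕ) (w : FreeMonoid A) : TreeRootH α β clM clN S h (α w) {β w}
  | binary {h : ℕ} {s₁ : M} {T₁ : Set N} {s₂ : M} {T₂ : Set N} (T : Set N) :
      TreeRootH α β clM clN S h s₁ T₁ → TreeRootH α β clM clN S h s₂ T₂ →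
      T ⊆ T₁ * T₂ → TreeRootH α β clM clN S h (s₁ * s₂) T
  | op {h : ℕ} {e : M} {E : Set N} (T : Set N) :
      TreeRootH α β clM clN S h e E → e * e = e → E * E = E →
      T ⊆ E * {t | t ∈ S ∧ clM e = clN t} * E →
      TreeRootH α β clM clN S (h + 1) e T

/-- `JDepthIs Q h` : the `J`-depth of the monoid `Q` is `h`, i.e. `h` is the greatest
length of a sequence of pairwise distinct elements `s₁, …, s_h` of `Q` such that each
`s_{i+1}` is of the form `x · s_i · y`. -/
def JDepthIs (Q : Type) [Monoid Q] (h : ℕ) : Prop :=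
  IsGreatest {n : ℕ | ∃ l : List Q, l.length = n ∧ l.Nodup ∧
    l.Chain' (fun a b => ∃ x y : Q, b = x * a * y)} h

/-- `(α,β,S)`-trees as trees: a node is a leaf (carrying a word), a binary node or an
`S`-operation node (each carrying its label in `M × 2^N`). -/
inductive STree (A M N : Type) where
  | leaf (w : List A)
  | binary (lab : M × Set N) (l r : STree A M N)
  | op (lab : M × Set N) (c : STree A M N)

namespace STree

variable {A M N Q : Type} [Monoid M] [Monoid N] [Monoid Q]

/-- The label of (the root of) a tree. -/
def label (α : FreeMonoid A →* M) (β : FreeMonoid A →* N) : STree A M N → M × Set N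
  | .leaf w => (α (FreeMonoid.ofList w), {β (FreeMonoid.ofList w)})
  | .binary lab _ _ => lab
  | .op lab _ => lab

/-- Validity of an `(α,β,S)`-tree: the label of a leaf carrying `w` is
`(α(w), {β(w)})`; a binary node with children labeled `(s₁,T₁)` and `(s₂,T₂)` is
labeled `(s₁s₂, T)` with `T ⊆ T₁T₂`; an `S`-operation node has a child whose label is
an idempotent `(e,E)` and is labeled `(e,T)` with
`T ⊆ E · {t ∈ S | [e]_C = [t]_C} · E`. -/
def Valid (α : FreeMonoid A →* M) (β : FreeMonoid A →* N)
    (clM : M →* Q) (clN : N →* Q) (S : Set N) : STree A M N → Prop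
  | .leaf _ => True
  | .binary lab l r =>
      Valid α β clM clN S l ∧ Valid α β clM clN S r ∧
      lab.1 = (l.label α β).1 * (r.label α β).1 ∧
      lab.2 ⊆ (l.label α β).2 * (r.label α β).2
  | .op lab c =>
      Valid α β clM clN S c ∧
      lab.1 = (c.label α β).1 ∧
      (c.label α β).1 * (c.label α β).1 = (c.label α β).1 ∧
      (c.label α β).2 * (c.label α β).2 = (c.label α β).2 ∧
      lab.2 ⊆ (c.label α β).2 * {t | t ∈ S ∧ clM (c.label α β).1 = clN t} *
        (c.label α β).2

/-- The operational size of a tree: its total number of `S`-operation nodes. -/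
def opSize : STree A M N → ℕ
  | .leaf _ => 0
  | .binary _ l r => l.opSize + r.opSize
  | .op _ c => c.opSize + 1

/-- Being an `S`-operation node. -/
def IsOp : STree A M N → Prop
  | .op _ _ => True
  | _ => False

/-- The child relation between a tree and its immediate subtrees. -/
inductive IsChild : STree A M N → STree A M N → Prop
  | binL (lab : M × Set N) (l r : STree A M N) : IsChild (.binary lab l r) l
  | binR (lab : M × Set N) (l r : STree A M N) : IsChild (.binary lab l r) r
  | op (lab : M × Set N) (c : STree A M N) : IsChild (.op lab c) c

end STree

/-! Labels multiply in the monoid `M × 2^N`, and validity of a tree says that each label is at most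
the product of its children's labels, or at most the result of the `S`-operation on an idempotent.
Let `(e,E)` be the label of the child of `x`, and let `z` be the first `S`-operation node met on the
way from this child down to `x'`, with child label `(f,F)`. Only binary nodes lie in between, so `e`
factors as `u·f·v` and `E ⊆ U·F·{t | [f] = [t]}·F·V`. Since `z` is above `x'` and `[s] = [s']`, the
idempotents `[e]` and `[f]` are `J`-equivalent in the finite monoid `A*/∼_C`, whence
`[f·v·e·u·f] = [f]`. So everything between the outer occurrences of `F` in the `S`-operation applied
to `E` can be absorbed by the `S`-operation at `z`: the node `x` is superfluous once the labels from
its child down to `z` are enlarged. -/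

section GreenPreorder

variable {Q R : Type*} [Monoid Q] [Monoid R] {a b c e f p u v x : Q}

/-- Green's preorder `a ≤_J b` on a monoid: `a` lies in the two-sided ideal `Q b Q`. -/
def JLE (a b : Q) : Prop := ∃ x y : Q, a = x * b * y

theorem JLE.refl (a : Q) : JLE a a := ⟨1, 1, by simp⟩

theorem JLE.trans (hab : JLE a b) (hbc : JLE b c) : JLE a c := by
  obtain ⟨x, y, rfl⟩ := hab
  obtain ⟨x', y', rfl⟩ := hbc
  exact ⟨x * x', y' * y, by simp only [mul_assoc]⟩

theorem JLE.map (φ : Q →* R) (h : JLE a b) : JLE (φ a) (φ b) := by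
  obtain ⟨x, y, rfl⟩ := h
  exact ⟨φ x, φ y, by simp only [map_mul]⟩

theorem eq_pow_mul_mul_pow (h : x = a * x * b) (n : ℕ) : x = a ^ n * x * b ^ n := by
  induction n with
  | zero => simp
  | succ n ih =>
    calc x = a ^ n * x * b ^ n := ih
      _ = a ^ n * (a * x * b) * b ^ n := by rw [← h]
      _ = a ^ (n + 1) * x * b ^ (n + 1) := by simp only [pow_succ a, pow_succ' b, mul_assoc]

theorem exists_mul_pow_succ_eq_self [Finite Q] (h : x = a * x * b) :
    ∃ n : ℕ, x * b ^ (n + 1) = x := by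
  obtain ⟨i, j, hij, hpow⟩ : ∃ i j : ℕ, i < j ∧ b ^ i = b ^ j :=
    Set.finite_univ.exists_lt_map_eq_of_forall_mem (f := (b ^ · : ℕ → Q)) fun _ => Set.mem_univ _
  obtain ⟨k, rfl⟩ := Nat.exists_eq_add_of_lt hij
  refine ⟨k, ?_⟩
  calc x * b ^ (k + 1) = a ^ i * x * b ^ i * b ^ (k + 1) := by rw [← eq_pow_mul_mul_pow h i]
    _ = a ^ i * x * b ^ i := by rw [mul_assoc, ← pow_add, ← add_assoc, ← hpow]
    _ = x := (eq_pow_mul_mul_pow h i).symm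

theorem JLE.eq_of_mul_eq [Finite Q] (hp : IsIdempotentElem p) (hfp : f * p = p)
    (hpf : p * f = p) (h : JLE f p) : p = f := by
  obtain ⟨a, b, hab⟩ := h
  have hfix : f = a * f * (p * b) := by rwa [← mul_assoc, mul_assoc a f p, hfp]
  obtain ⟨n, hn⟩ := exists_mul_pow_succ_eq_self hfix
  have hfactor : f = p * (b * (p * b) ^ n) := by
    calc f = f * (p * b) ^ (n + 1) := hn.symm
      _ = f * p * (b * (p * b) ^ n) := by simp only [pow_succ', mul_assoc]
      _ = p * (b * (p * b) ^ n) := by rw [hfp]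
  calc p = p * f := hpf.symm
    _ = p * (p * (b * (p * b) ^ n)) := by rw [← hfactor]
    _ = f := by rw [← mul_assoc, hp.eq, ← hfactor]

theorem JLE.mul_mul_mul_mul_eq [Finite Q] (he : IsIdempotentElem e) (hf : IsIdempotentElem f)
    (hfactor : e = u * f * v) (h : JLE f e) : f * v * e * u * f = f := by
  refine JLE.eq_of_mul_eq ?_ (by simp only [← mul_assoc, hf.eq]) (hf.mul_mul_self _)
    (h.trans ⟨u, v, ?_⟩)
  · calc f * v * e * u * f * (f * v * e * u * f) = f * v * e * (u * (f * f) * v) * e * u * f := by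
          simp only [mul_assoc]
      _ = f * v * e * u * f := by rw [hf.eq, ← hfactor, he.mul_mul_self, he.mul_mul_self]
  · calc e = e * e * e := by rw [he.eq, he.eq]
      _ = u * f * v * e * (u * f * v) := by rw [← hfactor]
      _ = u * (f * v * e * u * f) * v := by simp only [mul_assoc]

end GreenPreorder

/-- The order on labels: equal `M`-components and inclusion of the `N`-components. -/
def LabelLE {M N : Type*} (p q : M × Set N) : Prop := p.1 = q.1 ∧ p.2 ⊆ q.2

local infix:50 " ≼ " => LabelLE

section Labels

variable {M N Q : Type*} {p p' q q' g l r : M × Set N}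

theorem LabelLE.refl (p : M × Set N) : p ≼ p := ⟨rfl, subset_rfl⟩

theorem LabelLE.trans (hpq : p ≼ q) (hqr : q ≼ r) : p ≼ r :=
  ⟨hpq.1.trans hqr.1, hpq.2.trans hqr.2⟩

variable [Monoid M] [Monoid N] [Monoid Q] {clM : M →* Q} {clN : N →* Q} {S : Set N}

theorem LabelLE.mul (hp : p ≼ p') (hq : q ≼ q') : p * q ≼ p' * q' :=
  ⟨congrArg₂ (· * ·) hp.1 hq.1, Set.mul_subset_mul hp.2 hq.2⟩

/-- The elements of `S` in the class `q`: the set `{t ∈ S | q = [t]_C}`. -/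
def classFiber (clN : N →* Q) (S : Set N) (q : Q) : Set N := {t | t ∈ S ∧ q = clN t}

theorem classFiber_mul_subset (hS : ∀ s ∈ S, ∀ t ∈ S, s * t ∈ S) (a b : Q) :
    classFiber clN S a * classFiber clN S b ⊆ classFiber clN S (a * b) := by
  rintro _ ⟨s, ⟨hs, rfl⟩, t, ⟨ht, rfl⟩, rfl⟩
  exact ⟨hS s hs t ht, (map_mul clN s t).symm⟩

/-- A label `(s,T)` is consistent when `T ⊆ S` and `[t]_C = [s]_C` for all `t ∈ T`. Labels of
valid trees are consistent. -/
def IsConsistent (clM : M →* Q) (clN : N →* Q) (S : Set N) (p : M × Set N) : Prop :=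
  p.2 ⊆ classFiber clN S (clM p.1)

theorem IsConsistent.one (hS : 1 ∈ S) : IsConsistent clM clN S 1 := by
  rintro _ rfl
  exact ⟨hS, by simp⟩

theorem IsConsistent.mul (hS : ∀ s ∈ S, ∀ t ∈ S, s * t ∈ S) (hp : IsConsistent clM clN S p)
    (hq : IsConsistent clM clN S q) : IsConsistent clM clN S (p * q) := by
  rw [IsConsistent, Prod.fst_mul, map_mul]
  exact (Set.mul_subset_mul hp hq).trans (classFiber_mul_subset hS _ _)

theorem IsConsistent.mono (hpq : p ≼ q) (hq : IsConsistent clM clN S q) :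
    IsConsistent clM clN S p := by
  rw [IsConsistent, hpq.1]
  exact hpq.2.trans hq

theorem isConsistent_classFiber (s : M) :
    IsConsistent clM clN S (s, classFiber clN S (clM s)) := subset_rfl

/-- The largest label allowed at an `S`-operation node whose child has label `g`. -/
def opLabel (clM : M →* Q) (clN : N →* Q) (S : Set N) (g : M × Set N) : M × Set N :=
  (g.1, g.2 * classFiber clN S (clM g.1) * g.2)

theorem isConsistent_opLabel (hS : ∀ s ∈ S, ∀ t ∈ S, s * t ∈ S) (hg : IsIdempotentElem g)
    (h : IsConsistent clM clN S g) : IsConsistent clM clN S (opLabel clM clN S g) := by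
  have hfst : IsIdempotentElem g.1 := hg.map (MonoidHom.fst M (Set N))
  have hle : opLabel clM clN S g ≼ g * (g.1, classFiber clN S (clM g.1)) * g :=
    ⟨((hfst.mul_mul_self g.1).trans hfst).symm, subset_rfl⟩
  exact .mono hle ((h.mul hS (isConsistent_classFiber g.1)).mul hS h)

theorem opLabel_le_mul_opLabel_mul [Finite Q] (hS : ∀ s ∈ S, ∀ t ∈ S, s * t ∈ S)
    (hp : IsIdempotentElem p) (hg : IsIdempotentElem g)
    (hgc : IsConsistent clM clN S g) (hlc : IsConsistent clM clN S l)
    (hrc : IsConsistent clM clN S r) (hle : p ≼ l * opLabel clM clN S g * r)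
    (hJ : JLE (clM g.1) (clM p.1)) :
    opLabel clM clN S p ≼ l * opLabel clM clN S g * r := by
  set K : Q → Set N := classFiber clN S
  have hpfst : IsIdempotentElem (clM p.1) := (hp.map (MonoidHom.fst M (Set N))).map clM
  have hgfst : IsIdempotentElem (clM g.1) := (hg.map (MonoidHom.fst M (Set N))).map clM
  have hfactor : clM p.1 = clM l.1 * clM g.1 * clM r.1 := by
    rw [hle.1, ← map_mul, ← map_mul]; rfl
  have hclass : clM g.1 * (clM g.1 * clM r.1) * clM p.1 * (clM l.1 * clM g.1) * clM g.1 =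
      clM g.1 := by
    rw [← mul_assoc (clM g.1), hgfst.eq, ← mul_assoc _ (clM l.1), hgfst.mul_mul_self]
    exact JLE.mul_mul_mul_mul_eq hpfst hgfst hfactor hJ
  have hmiddle : K (clM g.1) * (g.2 * r.2) * K (clM p.1) * (l.2 * g.2) * K (clM g.1) ⊆
      K (clM g.1) := by
    have hgfiber : IsConsistent clM clN S (g.1, K (clM g.1)) := isConsistent_classFiber g.1
    have hpfiber : IsConsistent clM clN S (p.1, K (clM p.1)) := isConsistent_classFiber p.1
    have h := (((hgfiber.mul hS (hgc.mul hS hrc)).mul hS hpfiber).mul hS (hlc.mul hS hgc)).mul hS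
      hgfiber
    simpa only [IsConsistent, Prod.fst_mul, Prod.snd_mul, map_mul, hclass] using h
  refine ⟨hle.1, ?_⟩
  calc p.2 * K (clM p.1) * p.2
      ⊆ l.2 * (g.2 * K (clM g.1) * g.2) * r.2 * K (clM p.1) *
          (l.2 * (g.2 * K (clM g.1) * g.2) * r.2) :=
        Set.mul_subset_mul (Set.mul_subset_mul_right hle.2) hle.2
    _ = l.2 * (g.2 *
          (K (clM g.1) * (g.2 * r.2) * K (clM p.1) * (l.2 * g.2) * K (clM g.1)) * g.2) * r.2 := by
        simp only [mul_assoc]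
    _ ⊆ l.2 * (g.2 * K (clM g.1) * g.2) * r.2 := by gcongr

end Labels

namespace STree

variable {A M N Q : Type} [Monoid M] [Monoid N] [Monoid Q]
  {α : FreeMonoid A →* M} {β : FreeMonoid A →* N} {clM : M →* Q} {clN : N →* Q} {S : Set N}
  {t x z c l r : STree A M N} {lab : M × Set N}

theorem valid_binary_iff : (binary lab l r).Valid α β clM clN S ↔
    l.Valid α β clM clN S ∧ r.Valid α β clM clN S ∧ lab ≼ l.label α β * r.label α β :=
  Iff.rfl

theorem valid_op_iff : (op lab c).Valid α β clM clN S ↔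
    c.Valid α β clM clN S ∧ IsIdempotentElem (c.label α β) ∧
      lab ≼ opLabel clM clN S (c.label α β) := by
  rw [IsIdempotentElem, Prod.ext_iff]
  exact ⟨fun ⟨hc, h, h₁, h₂, hsub⟩ => ⟨hc, ⟨h₁, h₂⟩, h, hsub⟩,
    fun ⟨hc, ⟨h₁, h₂⟩, h, hsub⟩ => ⟨hc, h, h₁, h₂, hsub⟩⟩

theorem Valid.isConsistent_label (hS : GoodSubset β S) (hcl : ∀ w, clM (α w) = clN (β w))
    (ht : t.Valid α β clM clN S) : IsConsistent clM clN S (t.label α β) := by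
  induction t with
  | leaf w =>
    rintro _ rfl
    exact ⟨hS.1 _, hcl _⟩
  | binary lab l r ihl ihr =>
    obtain ⟨hl, hr, hle⟩ := valid_binary_iff.1 ht
    exact ((ihl hl).mul hS.2 (ihr hr)).mono hle
  | op lab c ih =>
    obtain ⟨hc, hidem, hle⟩ := valid_op_iff.1 ht
    exact (isConsistent_opLabel hS.2 hidem (ih hc)).mono hle

theorem IsChild.valid (h : IsChild t x) (ht : t.Valid α β clM clN S) :
    x.Valid α β clM clN S := by
  cases h with
  | binL => exact (valid_binary_iff.1 ht).1
  | binR => exact (valid_binary_iff.1 ht).2.1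
  | op => exact (valid_op_iff.1 ht).1

theorem IsChild.jle_label (h : IsChild t x) (ht : t.Valid α β clM clN S) :
    JLE (t.label α β).1 (x.label α β).1 := by
  cases h with
  | binL => exact ⟨1, _, by rw [one_mul]; exact (valid_binary_iff.1 ht).2.2.1⟩
  | binR => exact ⟨_, 1, by rw [mul_one]; exact (valid_binary_iff.1 ht).2.2.1⟩
  | op => exact ⟨1, 1, by rw [one_mul, mul_one]; exact (valid_op_iff.1 ht).2.2.1⟩

theorem jle_label_of_reflTransGen (h : Relation.ReflTransGen IsChild t x)
    (ht : t.Valid α β clM clN S) : JLE (t.label α β).1 (x.label α β).1 := by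
  induction h using Relation.ReflTransGen.head_induction_on with
  | refl => exact JLE.refl _
  | head hchild _ ih => exact (hchild.jle_label ht).trans (ih (hchild.valid ht))

/-- A tree `t` in which an `S`-operation node, with child label `g`, is reached from the root
through binary nodes only; `l` and `r` are the products of the labels of the subtrees hanging to
the left and to the right of this path. The field `exists_relabel` says that the labels along the
path may be enlarged, so that the root can carry any label below `l · opLabel g · r`. -/
structure IsOpFactorization (α : FreeMonoid A →* M) (β : FreeMonoid A →* N) (clM : M →* Q)
    (clN : N →* Q) (S : Set N) (t : STree A M N) (l g r : M × Set N) : Prop where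
  isIdempotentElem : IsIdempotentElem g
  isConsistent_left : IsConsistent clM clN S l
  isConsistent_mid : IsConsistent clM clN S g
  isConsistent_right : IsConsistent clM clN S r
  label_le : t.label α β ≼ l * opLabel clM clN S g * r
  exists_relabel : ∀ lab, lab ≼ l * opLabel clM clN S g * r →
    ∃ t' : STree A M N, t'.Valid α β clM clN S ∧ t'.label α β = lab ∧ t'.opSize = t.opSize

theorem isOpFactorization_op (hS : GoodSubset β S) (hcl : ∀ w, clM (α w) = clN (β w))
    (h : (op lab c).Valid α β clM clN S) :
    IsOpFactorization α β clM clN S (op lab c) 1 (c.label α β) 1 := by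
  obtain ⟨hc, hidem, hle⟩ := valid_op_iff.1 h
  have hone : (1 : N) ∈ S := map_one β ▸ hS.1 1
  refine ⟨hidem, .one hone, hc.isConsistent_label hS hcl, .one hone, ?_, fun lab' hlab' => ?_⟩
  · rwa [one_mul, mul_one]
  · rw [one_mul, mul_one] at hlab'
    exact ⟨op lab' c, valid_op_iff.2 ⟨hc, hidem, hlab'⟩, rfl, rfl⟩

theorem IsOpFactorization.binary_left {p g q : M × Set N} (hS : GoodSubset β S)
    (hcl : ∀ w, clM (α w) = clN (β w)) (h : (binary lab l r).Valid α β clM clN S)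
    (hl : IsOpFactorization α β clM clN S l p g q) :
    IsOpFactorization α β clM clN S (binary lab l r) p g (q * r.label α β) := by
  obtain ⟨-, hr, hle⟩ := valid_binary_iff.1 h
  refine ⟨hl.isIdempotentElem, hl.isConsistent_left, hl.isConsistent_mid,
    hl.isConsistent_right.mul hS.2 (hr.isConsistent_label hS hcl), ?_, fun lab' hlab' => ?_⟩
  · rw [← mul_assoc]
    exact hle.trans (hl.label_le.mul (.refl _))
  · obtain ⟨l', hl', hlabel, hsize⟩ := hl.exists_relabel _ (.refl _)
    refine ⟨binary lab' l' r, valid_binary_iff.2 ⟨hl', hr, ?_⟩, rfl, ?_⟩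
    · rwa [hlabel, mul_assoc _ q]
    · simp only [opSize, hsize]

theorem IsOpFactorization.binary_right {p g q : M × Set N} (hS : GoodSubset β S)
    (hcl : ∀ w, clM (α w) = clN (β w)) (h : (binary lab l r).Valid α β clM clN S)
    (hr : IsOpFactorization α β clM clN S r p g q) :
    IsOpFactorization α β clM clN S (binary lab l r) (l.label α β * p) g q := by
  obtain ⟨hl, -, hle⟩ := valid_binary_iff.1 h
  refine ⟨hr.isIdempotentElem, (hl.isConsistent_label hS hcl).mul hS.2 hr.isConsistent_left,
    hr.isConsistent_mid, hr.isConsistent_right, ?_, fun lab' hlab' => ?_⟩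
  · rw [mul_assoc, mul_assoc, ← mul_assoc p]
    exact hle.trans ((LabelLE.refl _).mul hr.label_le)
  · obtain ⟨r', hr', hlabel, hsize⟩ := hr.exists_relabel _ (.refl _)
    refine ⟨binary lab' l r', valid_binary_iff.2 ⟨hl, hr', ?_⟩, rfl, ?_⟩
    · rwa [hlabel, ← mul_assoc, ← mul_assoc]
    · simp only [opSize, hsize]

theorem exists_isOpFactorization (hS : GoodSubset β S) (hcl : ∀ w, clM (α w) = clN (β w))
    (ht : t.Valid α β clM clN S) (htz : Relation.ReflTransGen IsChild t z) (hz : z.IsOp) :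
    ∃ l g r, IsOpFactorization α β clM clN S t l g r ∧ JLE g.1 (z.label α β).1 := by
  induction htz using Relation.ReflTransGen.head_induction_on with
  | refl =>
    cases z with
    | leaf | binary => exact hz.elim
    | op lab c =>
      have hfst : lab.1 = (c.label α β).1 := (valid_op_iff.1 ht).2.2.1
      exact ⟨_, _, _, isOpFactorization_op hS hcl ht, hfst ▸ JLE.refl _⟩
  | head hchild hpath ih =>
    cases hchild with
    | binL =>
      obtain ⟨l, g, r, hfac, hJ⟩ := ih (valid_binary_iff.1 ht).1
      exact ⟨_, _, _, hfac.binary_left hS hcl ht, hJ⟩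
    | binR =>
      obtain ⟨l, g, r, hfac, hJ⟩ := ih (valid_binary_iff.1 ht).2.1
      exact ⟨_, _, _, hfac.binary_right hS hcl ht, hJ⟩
    | op =>
      exact ⟨_, _, _, isOpFactorization_op hS hcl ht,
        jle_label_of_reflTransGen hpath (valid_op_iff.1 ht).1⟩

/-- A tree is reducible when some valid tree with the same root label has strictly smaller
operational size. -/
def IsReducible (α : FreeMonoid A →* M) (β : FreeMonoid A →* N) (clM : M →* Q) (clN : N →* Q)
    (S : Set N) (t : STree A M N) : Prop :=
  ∃ t' : STree A M N, t'.Valid α β clM clN S ∧ t'.opSize < t.opSize ∧ t'.label α β = t.label α β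

theorem IsChild.isReducible (h : IsChild t x) (ht : t.Valid α β clM clN S)
    (hx : x.IsReducible α β clM clN S) : t.IsReducible α β clM clN S := by
  obtain ⟨x', hx', hsize, hlabel⟩ := hx
  cases h with
  | binL lab _ r =>
    refine ⟨binary lab x' r, ?_, Nat.add_lt_add_right hsize _, rfl⟩
    obtain ⟨-, hr, hle⟩ := valid_binary_iff.1 ht
    exact valid_binary_iff.2 ⟨hx', hr, hlabel ▸ hle⟩
  | binR lab l _ =>
    refine ⟨binary lab l x', ?_, Nat.add_lt_add_left hsize _, rfl⟩
    obtain ⟨hl, -, hle⟩ := valid_binary_iff.1 ht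
    exact valid_binary_iff.2 ⟨hl, hx', hlabel ▸ hle⟩
  | op lab _ =>
    refine ⟨.op lab x', ?_, Nat.succ_lt_succ hsize, rfl⟩
    obtain ⟨-, hop⟩ := valid_op_iff.1 ht
    exact valid_op_iff.2 ⟨hx', hlabel ▸ hop⟩

theorem isReducible_of_reflTransGen (h : Relation.ReflTransGen IsChild t x)
    (ht : t.Valid α β clM clN S) (hx : x.IsReducible α β clM clN S) :
    t.IsReducible α β clM clN S := by
  induction h using Relation.ReflTransGen.head_induction_on with
  | refl => exact hx
  | head hchild _ ih => exact hchild.isReducible ht (ih (hchild.valid ht))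

theorem valid_of_reflTransGen (h : Relation.ReflTransGen IsChild t x)
    (ht : t.Valid α β clM clN S) : x.Valid α β clM clN S := by
  induction h with
  | refl => exact ht
  | tail _ hchild ih => exact hchild.valid ih

theorem isReducible_op [Finite Q] (hS : GoodSubset β S) (hcl : ∀ w, clM (α w) = clN (β w))
    (h : (op lab c).Valid α β clM clN S) (hcz : Relation.ReflTransGen IsChild c z) (hz : z.IsOp)
    (hclass : clM lab.1 = clM (z.label α β).1) :
    (op lab c).IsReducible α β clM clN S := by
  obtain ⟨hc, hidem, hle⟩ := valid_op_iff.1 h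
  obtain ⟨l, g, r, hfac, hJ⟩ := exists_isOpFactorization hS hcl hc hcz hz
  have hJc : JLE (clM g.1) (clM (c.label α β).1) := by
    have hfst : lab.1 = (c.label α β).1 := hle.1
    rw [← hfst, hclass]
    exact hJ.map clM
  have hop : opLabel clM clN S (c.label α β) ≼ l * opLabel clM clN S g * r :=
    opLabel_le_mul_opLabel_mul hS.2 hidem hfac.isIdempotentElem hfac.isConsistent_mid
      hfac.isConsistent_left hfac.isConsistent_right hfac.label_le hJc
  obtain ⟨c', hc', hlabel, hsize⟩ := hfac.exists_relabel lab (hle.trans hop)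
  exact ⟨c', hc', hsize ▸ Nat.lt_succ_self _, hlabel⟩

end STree

theorem finite_quotient_of_map_eq_mk' {W M : Type*} [MulOneClass W] [Finite M]
    {c : Con W} {α : W → M} {cl : M → c.Quotient} (h : ∀ w, cl (α w) = c.mk' w) :
    Finite c.Quotient :=
  Finite.of_surjective cl fun q => (Con.mk'_surjective q).imp' α fun w hw => (h w).trans hw

theorem statement10_general {A M N Q : Type} [Monoid M] [Monoid N] [Monoid Q] [Finite Q]
    {α : FreeMonoid A →* M} {β : FreeMonoid A →* N} {clM : M →* Q} {clN : N →* Q}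
    (hcl : ∀ w, clM (α w) = clN (β w)) {S : Set N} (hS : GoodSubset β S)
    {𝕋 x x' : STree A M N} (hvalid : 𝕋.Valid α β clM clN S)
    (hx : Relation.ReflTransGen STree.IsChild 𝕋 x)
    (hxx' : Relation.TransGen STree.IsChild x x') (hxop : x.IsOp) (hx'op : x'.IsOp)
    (hclass : clM (x.label α β).1 = clM (x'.label α β).1) :
    ∃ 𝕋' : STree A M N, 𝕋'.Valid α β clM clN S ∧
      𝕋'.opSize < 𝕋.opSize ∧ 𝕋'.label α β = 𝕋.label α β := by
  refine STree.isReducible_of_reflTransGen hx hvalid ?_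
  have hxvalid := STree.valid_of_reflTransGen hx hvalid
  obtain ⟨c, hchild, hpath⟩ := Relation.TransGen.head'_iff.1 hxx'
  cases hchild with
  | binL | binR => exact hxop.elim
  | op => exact STree.isReducible_op hS hcl hxvalid hpath hx'op hclass

theorem statement10
    (C : LangClass) (hqba : IsQBA C) (hfin : IsFiniteClass C)
    {A : Type} [Fintype A]
    (hcong : ∀ u v u' v' : FreeMonoid A,
      cRel (C A) u u' → cRel (C A) v v' → cRel (C A) (u * v) (u' * v'))
    {M N : Type} [Monoid M] [Fintype M] [Monoid N] [Fintype N]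
    (α : FreeMonoid A →* M) (β : FreeMonoid A →* N)
    (clM : M →* (cCon (C A) hcong).Quotient)
    (hclM : ∀ w : FreeMonoid A, clM (α w) = (cCon (C A) hcong).mk' w)
    (clN : N →* (cCon (C A) hcong).Quotient)
    (hclN : ∀ w : FreeMonoid A, clN (β w) = (cCon (C A) hcong).mk' w)
    (S : Set N) (hS : GoodSubset β S)
    (𝕋 : STree A M N) (hvalid : 𝕋.Valid α β clM clN S)
    -- a branch of `𝕋` contains two distinct `S`-operation nodes `x` and `x'`
    (x x' : STree A M N)
    (hx : Relation.ReflTransGen STree.IsChild 𝕋 x)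
    (hxx' : Relation.TransGen STree.IsChild x x')
    (hxop : x.IsOp) (hx'op : x'.IsOp)
    -- whose labels `(s,T)` and `(s',T')` satisfy `[s]_C = [s']_C`
    (hcl : clM (x.label α β).1 = clM (x'.label α β).1) :
    ∃ 𝕋' : STree A M N, 𝕋'.Valid α β clM clN S ∧
      𝕋'.opSize < 𝕋.opSize ∧ 𝕋'.label α β = 𝕋.label α β := by
  have := finite_quotient_of_map_eq_mk' hclM
  exact statement10_general (fun w => (hclM w).trans (hclN w).symm) hS hvalid hx hxx' hxop hx'op hcl
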